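/- For n ≥ 4, ψ_n is not a cone: there exists w ∈ ℝ^{2^n−1} and λ > 0 such that λw ∈ ψ_n but w ∉ ψ_n. -/

import Mathlib

open MeasureTheory

/-- The projection of a set `T ⊆ ℝ^n` onto the coordinate subspace spanned by
the axes in `A`, viewed as a subset of `↥A → ℝ`. -/
def proj {n : ℕ} (A : Finset (Fin n)) (T : Set (Fin n → ℝ)) : Set (↥A → ℝ) :=
  (fun (f : Fin n → ℝ) (i : ↥A) => f i.1) '' T

/-- The constructible region `ψ_n`. -/
def psi (n : ℕ) : Set ({A : Finset (Fin n) // A.Nonempty} → ℝ) :=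
  {x | ∃ T : Set (Fin n → ℝ), IsCompact T ∧
    ∀ A : {A : Finset (Fin n) // A.Nonempty}, x A = Real.log (volume (proj A.1 T)).toReal}

/-!
Fix disjoint `P, Q, R, S ⊆ [n]` and write `PQR` for `P ∪ Q ∪ R`, etc. Inside `ℝ^(PQRS)`, the two
products `T_PQR × T_S` and `T_PQS × T_R` have their union contained in `T_PQ × T_R × T_S` and their
intersection contained in `T_PR × T_QS`. Hence every compact `T` satisfies
`|T_PQR| |T_S| + |T_PQS| |T_R| ≤ |T_PQ| |T_R| |T_S| + |T_PR| |T_QS|`.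
This is a sum of exponentials in the coordinates `log |T_A|`, so it need not survive rescaling them.
A suitable union of three boxes attains equality, `1/4 + 1/4 = 7/16 + 1/16`, and halving its
logarithms would require `1/2 + 1/2 ≤ √7/4 + 1/4`, which fails because `√7 < 3`.
-/

section Product

variable {ι : Type*} {X : ι → Type*} {A B C : Finset ι}

/-- The product `U × V` of `U ⊆ ∏_{i ∈ A} X i` and `V ⊆ ∏_{i ∈ B} X i`, as a subset of
`∏_{i ∈ C} X i` where `A, B ⊆ C`. It is a genuine product only if `C` is the disjoint union of `A`
and `B`; having `C` as a parameter lets different splittings of it be compared. -/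
def prodIn (hA : A ⊆ C) (hB : B ⊆ C) (U : Set (∀ i : A, X i)) (V : Set (∀ i : B, X i)) :
    Set (∀ i : C, X i) :=
  Finset.restrict₂ hA ⁻¹' U ∩ Finset.restrict₂ hB ⁻¹' V

theorem measurableSet_prodIn [∀ i, MeasurableSpace (X i)] {U : Set (∀ i : A, X i)}
    {V : Set (∀ i : B, X i)} (hU : MeasurableSet U) (hV : MeasurableSet V) (hA : A ⊆ C)
    (hB : B ⊆ C) : MeasurableSet (prodIn hA hB U V) :=
  (Finset.measurable_restrict₂ hA hU).inter (Finset.measurable_restrict₂ hB hV)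

theorem volume_prodIn [DecidableEq ι] [∀ i, MeasureSpace (X i)]
    [∀ i, SigmaFinite (volume : Measure (X i))] (hAB : Disjoint A B) (hA : A ⊆ C) (hB : B ⊆ C)
    (hC : C ⊆ A ∪ B) (U : Set (∀ i : A, X i)) (V : Set (∀ i : B, X i)) :
    volume (prodIn hA hB U V) = volume U * volume V := by
  obtain rfl : A ∪ B = C := (Finset.union_subset hA hB).antisymm hC
  rw [← (volume_preserving_piFinsetUnion X hAB).measure_preimage_equiv, ← Measure.prod_prod,
    ← Measure.volume_eq_prod]
  congr 1
  ext ⟨y, z⟩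
  have restrict_left : Finset.restrict₂ hA (MeasurableEquiv.piFinsetUnion X hAB (y, z)) = y :=
    funext fun i => Equiv.piFinsetUnion_left X hAB i.2 (hA i.2)
  have restrict_right : Finset.restrict₂ hB (MeasurableEquiv.piFinsetUnion X hAB (y, z)) = z :=
    funext fun i => Equiv.piFinsetUnion_right X hAB i.2 (hB i.2)
  simp only [prodIn, Set.mem_preimage, Set.mem_inter_iff, restrict_left, restrict_right,
    Set.mem_prod]

end Product

section Projection

variable {n : ℕ} {A B : Finset (Fin n)} {T : Set (Fin n → ℝ)}

theorem isCompact_proj (A : Finset (Fin n)) (hT : IsCompact T) : IsCompact (proj A T) :=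
  hT.image A.continuous_restrict

theorem restrict₂_mem_proj (h : A ⊆ B) {x : B → ℝ} (hx : x ∈ proj B T) :
    Finset.restrict₂ (π := fun _ => ℝ) h x ∈ proj A T := by
  obtain ⟨f, hf, rfl⟩ := hx
  exact ⟨f, hf, rfl⟩

theorem volume_proj_union_le (hAB : Disjoint A B) (T : Set (Fin n → ℝ)) :
    volume (proj (A ∪ B) T) ≤ volume (proj A T) * volume (proj B T) := by
  rw [← volume_prodIn (X := fun _ => ℝ) hAB Finset.subset_union_left Finset.subset_union_right
    subset_rfl]
  exact measure_mono fun x hx => ⟨restrict₂_mem_proj _ hx, restrict₂_mem_proj _ hx⟩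

theorem volume_proj_ne_zero_of_subset (h : B ⊆ A) (hA : volume (proj A T) ≠ 0) :
    volume (proj B T) ≠ 0 := by
  rw [← Finset.union_sdiff_of_subset h] at hA
  exact left_ne_zero_of_mul (ne_bot_of_le_ne_bot hA (volume_proj_union_le Finset.disjoint_sdiff T))

section Inclusion

variable {A₁ A₂ C D R S : Finset (Fin n)}

theorem prodIn_proj_union_prodIn_proj_subset (h₁ : A₁ ⊆ C) (h₂ : A₂ ⊆ C) (hR : R ⊆ C) (hS : S ⊆ C)
    (hD₁ : D ⊆ A₁) (hD₂ : D ⊆ A₂) (hRA : R ⊆ A₁) (hSA : S ⊆ A₂) :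
    prodIn (X := fun _ => ℝ) h₁ hS (proj A₁ T) (proj S T) ∪
        prodIn (X := fun _ => ℝ) h₂ hR (proj A₂ T) (proj R T) ⊆
      prodIn (X := fun _ => ℝ) (hD₁.trans h₁) (Finset.union_subset hR hS) (proj D T)
        (prodIn (X := fun _ => ℝ) Finset.subset_union_left Finset.subset_union_right (proj R T)
          (proj S T)) := by
  rintro x (⟨hx, hxS⟩ | ⟨hx, hxR⟩)
  · exact ⟨restrict₂_mem_proj hD₁ hx, restrict₂_mem_proj hRA hx, hxS⟩
  · exact ⟨restrict₂_mem_proj hD₂ hx, hxR, restrict₂_mem_proj hSA hx⟩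

theorem prodIn_proj_inter_prodIn_proj_subset {D₁ D₂ : Finset (Fin n)} (h₁ : A₁ ⊆ C) (h₂ : A₂ ⊆ C)
    (hR : R ⊆ C) (hS : S ⊆ C) (hD₁ : D₁ ⊆ A₁) (hD₂ : D₂ ⊆ A₂) (U : Set (S → ℝ))
    (V : Set (R → ℝ)) :
    prodIn (X := fun _ => ℝ) h₁ hS (proj A₁ T) U ∩ prodIn (X := fun _ => ℝ) h₂ hR (proj A₂ T) V ⊆
      prodIn (X := fun _ => ℝ) (hD₁.trans h₁) (hD₂.trans h₂) (proj D₁ T) (proj D₂ T) :=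
  fun _ ⟨⟨hx₁, _⟩, ⟨hx₂, _⟩⟩ => ⟨restrict₂_mem_proj hD₁ hx₁, restrict₂_mem_proj hD₂ hx₂⟩

end Inclusion

theorem volume_proj_mul_add_volume_proj_mul_le {P Q R S : Finset (Fin n)} (hPQ : Disjoint P Q)
    (hRS : Disjoint R S) (h : Disjoint (P ∪ Q) (R ∪ S)) (hT : IsCompact T) :
    volume (proj (P ∪ (Q ∪ R)) T) * volume (proj S T) +
        volume (proj (P ∪ (Q ∪ S)) T) * volume (proj R T) ≤
      volume (proj (P ∪ Q) T) * (volume (proj R T) * volume (proj S T)) +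
        volume (proj (P ∪ R) T) * volume (proj (Q ∪ S) T) := by
  simp only [Finset.disjoint_union_left, Finset.disjoint_union_right] at h
  obtain ⟨⟨hPR, hQR⟩, hPS, hQS⟩ := h
  have hPQR : P ∪ (Q ∪ R) ⊆ P ∪ Q ∪ R ∪ S := by grind
  have hPQS : P ∪ (Q ∪ S) ⊆ P ∪ Q ∪ R ∪ S := by grind
  have hR : R ⊆ P ∪ Q ∪ R ∪ S := by grind
  have hS : S ⊆ P ∪ Q ∪ R ∪ S := by grind
  have measurable_PQR_S : MeasurableSet
      (prodIn (X := fun _ => ℝ) hPQR hS (proj _ T) (proj _ T)) :=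
    measurableSet_prodIn (isCompact_proj _ hT).measurableSet (isCompact_proj _ hT).measurableSet _ _
  have union_le := measure_mono (μ := volume) (prodIn_proj_union_prodIn_proj_subset (T := T)
    (D := P ∪ Q) hPQR hPQS hR hS (by grind) (by grind) (by grind) (by grind))
  have inter_le := measure_mono (μ := volume) (prodIn_proj_inter_prodIn_proj_subset (T := T)
    (D₁ := P ∪ R) (D₂ := Q ∪ S) hPQR hPQS hR hS (by grind) (by grind) (proj S T)
    (proj R T))
  have sum_le :=
    (measure_union_add_inter' measurable_PQR_S _).symm.trans_le (add_le_add union_le inter_le)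
  rwa [volume_prodIn (X := fun _ => ℝ) (by simp [*]) _ _ (by grind),
    volume_prodIn (X := fun _ => ℝ) (by simp [hRS.symm, *]) _ _ (by grind),
    volume_prodIn (X := fun _ => ℝ) (by simp [*]) _ _ (by grind),
    volume_prodIn (X := fun _ => ℝ) hRS _ _ subset_rfl,
    volume_prodIn (X := fun _ => ℝ) (by simp [hQR.symm, *]) _ _ (by grind)] at sum_le

end Projection

section LogVolume

variable {n : ℕ} {T : Set (Fin n → ℝ)}

/-- The vector `(log |T_A|)_A` of log-volumes of the projections of `T`. A null projection gives
the coordinate `0`, by the convention `Real.log 0 = 0`. -/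
noncomputable def logVol (T : Set (Fin n → ℝ)) : {A : Finset (Fin n) // A.Nonempty} → ℝ :=
  fun A => Real.log (volume.real (proj A.1 T))

theorem mem_psi_iff {x : {A : Finset (Fin n) // A.Nonempty} → ℝ} :
    x ∈ psi n ↔ ∃ T, IsCompact T ∧ x = logVol T :=
  exists_congr fun _ => and_congr_right fun _ => funext_iff.symm

theorem volume_proj_ne_zero_of_logVol_ne_zero {A : {A : Finset (Fin n) // A.Nonempty}}
    (h : logVol T A ≠ 0) : volume (proj A.1 T) ≠ 0 := by
  contrapose! h
  simp [logVol, measureReal_def, h]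

theorem ofReal_exp_logVol (hT : IsCompact T) {A : Finset (Fin n)} (hA : A.Nonempty)
    (h : volume (proj A T) ≠ 0) :
    ENNReal.ofReal (Real.exp (logVol T ⟨A, hA⟩)) = volume (proj A T) := by
  have h_top : volume (proj A T) ≠ ⊤ := (isCompact_proj A hT).measure_ne_top
  rw [logVol, measureReal_def, Real.exp_log (ENNReal.toReal_pos h h_top),
    ENNReal.ofReal_toReal h_top]

theorem exp_add_exp_le_of_mem_psi {x : {A : Finset (Fin n) // A.Nonempty} → ℝ} (hx : x ∈ psi n)
    {p q r s : Fin n} (hd : [p, q, r, s].Nodup) (hpqr : x ⟨{p, q, r}, by simp⟩ ≠ 0)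
    (hpqs : x ⟨{p, q, s}, by simp⟩ ≠ 0) :
    Real.exp (x ⟨{p, q, r}, by simp⟩) * Real.exp (x ⟨{s}, by simp⟩) +
        Real.exp (x ⟨{p, q, s}, by simp⟩) * Real.exp (x ⟨{r}, by simp⟩) ≤
      Real.exp (x ⟨{p, q}, by simp⟩) *
          (Real.exp (x ⟨{r}, by simp⟩) * Real.exp (x ⟨{s}, by simp⟩)) +
        Real.exp (x ⟨{p, r}, by simp⟩) * Real.exp (x ⟨{q, s}, by simp⟩) := by
  obtain ⟨T, hT, rfl⟩ := mem_psi_iff.1 hx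
  obtain ⟨⟨hpq, hpr, hps⟩, ⟨hqr, hqs⟩, hrs⟩ :
      (p ≠ q ∧ p ≠ r ∧ p ≠ s) ∧ (q ≠ r ∧ q ≠ s) ∧ r ≠ s := by simpa using hd
  have exp_pqr {A : Finset (Fin n)} (hA : A.Nonempty) (h : A ⊆ {p, q, r}) :=
    ofReal_exp_logVol hT hA
      (volume_proj_ne_zero_of_subset h (volume_proj_ne_zero_of_logVol_ne_zero hpqr))
  have exp_pqs {A : Finset (Fin n)} (hA : A.Nonempty) (h : A ⊆ {p, q, s}) :=
    ofReal_exp_logVol hT hA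
      (volume_proj_ne_zero_of_subset h (volume_proj_ne_zero_of_logVol_ne_zero hpqs))
  rw [← ENNReal.ofReal_le_ofReal_iff (by positivity)]
  simp (disch := positivity) only [ENNReal.ofReal_mul, ENNReal.ofReal_add]
  rw [exp_pqr (A := {p, q, r}) _ (by grind), exp_pqr (A := {p, q}) _ (by grind),
    exp_pqr (A := {p, r}) _ (by grind), exp_pqr (A := {r}) _ (by grind),
    exp_pqs (A := {p, q, s}) _ (by grind), exp_pqs (A := {q, s}) _ (by grind),
    exp_pqs (A := {s}) _ (by grind)]
  exact volume_proj_mul_add_volume_proj_mul_le (P := {p}) (Q := {q}) (R := {r}) (S := {s})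
    (by simp [hpq]) (by simp [hrs]) (by simp [*, Ne.symm]) hT

end LogVolume

section Boxes

variable {n : ℕ}

theorem proj_Icc (A : Finset (Fin n)) {a b : Fin n → ℝ} (hab : a ≤ b) :
    proj A (Set.Icc a b) = Set.Icc (fun i : A => a i) (fun i => b i) := by
  refine Set.Subset.antisymm ?_ fun y ⟨hay, hyb⟩ => ?_
  · rintro _ ⟨f, ⟨haf, hfb⟩, rfl⟩
    exact ⟨fun i => haf i, fun i => hfb i⟩
  · refine ⟨Function.updateFinset (π := fun _ => ℝ) a A y, ⟨fun i => ?_, fun i => ?_⟩,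
      Function.restrict_updateFinset (π := fun _ => ℝ) a y⟩
    · by_cases hi : i ∈ A
      · simpa [Function.updateFinset, hi] using hay ⟨i, hi⟩
      · simp [Function.updateFinset, hi]
    · by_cases hi : i ∈ A
      · simpa [Function.updateFinset, hi] using hyb ⟨i, hi⟩
      · simpa [Function.updateFinset, hi] using hab i

theorem measureReal_Icc_union_Icc {ι : Type*} [Fintype ι] {l a b : ι → ℝ} (ha : l ≤ a)
    (hb : l ≤ b) :
    volume.real (Set.Icc l a ∪ Set.Icc l b) =
      ∏ i, (a i - l i) + ∏ i, (b i - l i) - ∏ i, (min (a i) (b i) - l i) := by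
  have h := measureReal_union_add_inter (μ := volume) (s := Set.Icc l a) (t := Set.Icc l b)
    measurableSet_Icc isCompact_Icc.measure_ne_top isCompact_Icc.measure_ne_top
  rw [Set.Icc_inter_Icc, sup_idem] at h
  simp only [measureReal_def, Real.volume_Icc_pi_toReal ha, Real.volume_Icc_pi_toReal hb,
    Real.volume_Icc_pi_toReal (le_inf ha hb), Pi.inf_apply] at h ⊢
  exact eq_sub_of_add_eq h

theorem measureReal_proj_union_Icc {A : Finset (Fin n)} {l a b c : Fin n → ℝ} (ha : l ≤ a)
    (hb : l ≤ b) (hc : l ≤ c) (hca : ∀ i ∈ A, c i ≤ a i) :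
    volume.real (proj A (Set.Icc l a ∪ Set.Icc l b ∪ Set.Icc l c)) =
      ∏ i ∈ A, (a i - l i) + ∏ i ∈ A, (b i - l i) - ∏ i ∈ A, (min (a i) (b i) - l i) := by
  have third_subset_first : proj A (Set.Icc l c) ⊆ proj A (Set.Icc l a) := by
    rw [proj_Icc A ha, proj_Icc A hc]
    exact Set.Icc_subset_Icc_right fun i => hca i i.2
  have h_proj : proj A (Set.Icc l a ∪ Set.Icc l b ∪ Set.Icc l c) =
      Set.Icc (fun i : A => l i) (fun i => a i) ∪
        Set.Icc (fun i : A => l i) (fun i => b i) := by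
    rw [← proj_Icc A ha, ← proj_Icc A hb, ← Set.union_eq_left.2 third_subset_first]
    simp only [proj, Set.image_union, Set.union_right_comm]
  rw [h_proj, measureReal_Icc_union_Icc (fun i : A => ha i) (fun i : A => hb i)]
  simp only [← Finset.prod_coe_sort A]

end Boxes

section ExtremalSet

variable {n : ℕ} {p q r s : Fin n}

/-- The upper corner of the box whose side is `[0, 1/4]` in direction `i`, `[0, a]` in direction `j`
and `[0, 1]` in every other direction. -/
noncomputable def corner (i j : Fin n) (a : ℝ) : Fin n → ℝ :=
  Function.update (Function.update 1 i (1 / 4)) j a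

theorem corner_nonneg (i j : Fin n) {a : ℝ} (ha : 0 ≤ a) : 0 ≤ corner i j a := by
  intro k
  simp only [corner, Function.update_apply, Pi.zero_apply, Pi.one_apply]
  split_ifs <;> norm_num [ha]

/-- A set attaining equality in `volume_proj_mul_add_volume_proj_mul_le`. The first two boxes are
flat, in direction `s` and `r` respectively; the third makes every projection non-null, and is
contained in the first after projecting along `s`, in the second after projecting along `r`. -/
def extremalSet (p q r s : Fin n) : Set (Fin n → ℝ) :=
  Set.Icc 0 (corner p s 0) ∪ Set.Icc 0 (corner q r 0) ∪ Set.Icc 0 (corner p q (1 / 4))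

theorem isCompact_extremalSet : IsCompact (extremalSet p q r s) :=
  (isCompact_Icc.union isCompact_Icc).union isCompact_Icc

theorem extremalSet_swap (hpq : p ≠ q) : extremalSet q p s r = extremalSet p q r s := by
  rw [extremalSet, extremalSet, Set.union_comm (Set.Icc 0 _), corner, corner, corner, corner,
    Function.update_comm hpq]

theorem measureReal_proj_extremalSet {A : Finset (Fin n)} (hA : s ∉ A) :
    volume.real (proj A (extremalSet p q r s)) = ∏ i ∈ A, corner p s 0 i +
      ∏ i ∈ A, corner q r 0 i - ∏ i ∈ A, min (corner p s 0 i) (corner q r 0 i) := by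
  have third_le_first : ∀ i ∈ A, corner p q (1 / 4) i ≤ corner p s 0 i := by
    intro i hi
    have his : i ≠ s := ne_of_mem_of_not_mem hi hA
    simp only [corner, Function.update_apply, if_neg his, Pi.one_apply]
    split_ifs <;> norm_num
  rw [extremalSet, measureReal_proj_union_Icc (corner_nonneg p s le_rfl) (corner_nonneg q r le_rfl)
    (corner_nonneg p q (by norm_num)) third_le_first]
  simp only [Pi.zero_apply, sub_zero]

theorem measureReal_proj_extremalSet_of_mem_of_notMem {A : Finset (Fin n)} (hr : r ∈ A)
    (hs : s ∉ A) : volume.real (proj A (extremalSet p q r s)) = if p ∈ A then 1 / 4 else 1 := by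
  have second_flat : corner q r 0 r = 0 := Function.update_self ..
  have second_null : ∏ i ∈ A, corner q r 0 i = 0 := Finset.prod_eq_zero hr second_flat
  have overlap_null : ∏ i ∈ A, min (corner p s 0 i) (corner q r 0 i) = 0 :=
    Finset.prod_eq_zero hr (second_flat.symm ▸ min_eq_right (corner_nonneg p s le_rfl r))
  rw [measureReal_proj_extremalSet hs, second_null, overlap_null, add_zero, sub_zero, corner,
    Finset.prod_update_of_notMem hs]
  simp [Function.update_apply]

theorem measureReal_proj_extremalSet_of_notMem_of_mem {A : Finset (Fin n)} (hpq : p ≠ q)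
    (hr : r ∉ A) (hs : s ∈ A) :
    volume.real (proj A (extremalSet p q r s)) = if q ∈ A then 1 / 4 else 1 := by
  rw [← extremalSet_swap hpq, measureReal_proj_extremalSet_of_mem_of_notMem hs hr]

theorem measureReal_proj_pair_extremalSet (hpq : p ≠ q) (hpr : p ≠ r) (hps : p ≠ s) (hqr : q ≠ r)
    (hqs : q ≠ s) : volume.real (proj {p, q} (extremalSet p q r s)) = 7 / 16 := by
  rw [measureReal_proj_extremalSet (by simp [hps.symm, hqs.symm])]
  simp only [corner, Function.update_apply, Finset.prod_pair hpq, hpq, hpq.symm, hpr, hps, hqr, hqs,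
    if_true, if_false, Pi.one_apply]
  norm_num

theorem exp_two_inv_smul_logVol {T : Set (Fin n → ℝ)} {A : Finset (Fin n)} (hA : A.Nonempty)
    (h : 0 < volume.real (proj A T)) :
    Real.exp (((2⁻¹ : ℝ) • logVol T) ⟨A, hA⟩) = √(volume.real (proj A T)) := by
  rw [Real.sqrt_eq_rpow, Real.rpow_def_of_pos h, Pi.smul_apply, logVol, smul_eq_mul, one_div,
    mul_comm]

theorem two_inv_smul_logVol_extremalSet_notMem_psi (hd : [p, q, r, s].Nodup) :
    (2⁻¹ : ℝ) • logVol (extremalSet p q r s) ∉ psi n := by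
  intro h
  obtain ⟨⟨hpq, hpr, hps⟩, ⟨hqr, hqs⟩, hrs⟩ :
      (p ≠ q ∧ p ≠ r ∧ p ≠ s) ∧ (q ≠ r ∧ q ≠ s) ∧ r ≠ s := by simpa using hd
  have vol_pqr : volume.real (proj {p, q, r} (extremalSet p q r s)) = 1 / 4 := by
    rw [measureReal_proj_extremalSet_of_mem_of_notMem (by simp) (by grind), if_pos (by simp)]
  have vol_pqs : volume.real (proj {p, q, s} (extremalSet p q r s)) = 1 / 4 := by
    rw [measureReal_proj_extremalSet_of_notMem_of_mem hpq (by grind) (by simp), if_pos (by simp)]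
  have vol_pr : volume.real (proj {p, r} (extremalSet p q r s)) = 1 / 4 := by
    rw [measureReal_proj_extremalSet_of_mem_of_notMem (by simp) (by grind), if_pos (by simp)]
  have vol_qs : volume.real (proj {q, s} (extremalSet p q r s)) = 1 / 4 := by
    rw [measureReal_proj_extremalSet_of_notMem_of_mem hpq (by grind) (by simp), if_pos (by simp)]
  have vol_r : volume.real (proj {r} (extremalSet p q r s)) = 1 := by
    rw [measureReal_proj_extremalSet_of_mem_of_notMem (by simp) (by grind), if_neg (by grind)]
  have vol_s : volume.real (proj {s} (extremalSet p q r s)) = 1 := by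
    rw [measureReal_proj_extremalSet_of_notMem_of_mem hpq (by grind) (by simp), if_neg (by grind)]
  have vol_pq := measureReal_proj_pair_extremalSet hpq hpr hps hqr hqs
  have log_ne_zero : Real.log (1 / 4) ≠ 0 := (Real.log_neg (by norm_num) (by norm_num)).ne
  have sum_le := exp_add_exp_le_of_mem_psi h hd (by simpa [logVol, vol_pqr] using log_ne_zero)
    (by simpa [logVol, vol_pqs] using log_ne_zero)
  simp (disch := norm_num [*]) only [exp_two_inv_smul_logVol, vol_pqr, vol_pqs, vol_pr, vol_qs,
    vol_r, vol_s, vol_pq] at sum_le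
  have sqrt_quarter : √(1 / 4 : ℝ) = 1 / 2 := by
    rw [Real.sqrt_eq_iff_mul_self_eq] <;> norm_num
  have sqrt_lt : √(7 / 16 : ℝ) < 3 / 4 := by
    rw [Real.sqrt_lt'] <;> norm_num
  rw [sqrt_quarter, Real.sqrt_one] at sum_le
  linarith

end ExtremalSet

/-- For `n ≥ 4`, `ψ_n` is not a cone: some `λ w` with `λ > 0` is
constructible while `w` is not. -/
theorem psi_not_cone {n : ℕ} (hn : 4 ≤ n) :
    ∃ (w : {A : Finset (Fin n) // A.Nonempty} → ℝ) (lam : ℝ),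
      0 < lam ∧ lam • w ∈ psi n ∧ w ∉ psi n := by
  have hd : [Fin.castLE hn 0, Fin.castLE hn 1, Fin.castLE hn 2, Fin.castLE hn 3].Nodup := by
    simp [Fin.ext_iff]
  refine ⟨_, 2, two_pos, ?_, two_inv_smul_logVol_extremalSet_notMem_psi hd⟩
  rw [smul_inv_smul₀ two_ne_zero]
  exact mem_psi_iff.2 ⟨_, isCompact_extremalSet, rfl⟩
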